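/- arXiv:1901.01589 — 5 statements merged into one kernel-verified Lean document; each statement's English description precedes it below -/
import Mathlib

section
/- A W-linear endomorphism M of D satisfies M ∘ F = F ∘ M if and only if there exist a, b ∈ W with σ²(a) = a and σ²(b) = b such that M(e₁) = a·e₁ + b·e₂ and M(e₂) = p·σ(b)·e₁ + σ(a)·e₂. -/
/-!
Write `F` for the semilinear map and `e₁, e₂` for the basis. Since `e₂ = F e₁`, an endomorphism `M`
commuting with `F` is determined by `M e₁`, through `M e₂ = F (M e₁)`; commutation at `e₂` then
reads `p • M e₁ = F² (M e₁)`. As `F²` is `p` times the coordinatewise `σ²`, cancelling `p` says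
exactly that the coordinates of `M e₁` are fixed by `σ²`.
-/

theorem commutes_iff_forall_basis {ι R V : Type*} [Semiring R] [AddCommMonoid V] [Module R V]
    {σ : R →+* R} (e : Module.Basis ι R V) (F : V →ₛₗ[σ] V) (M : V →ₗ[R] V) :
    (∀ d, M (F d) = F (M d)) ↔ ∀ i, M (F (e i)) = F (M (e i)) :=
  ⟨fun h i ↦ h (e i), fun h ↦ LinearMap.congr_fun (e.ext h : M ∘ₛₗ F = F ∘ₛₗ M)⟩

section TwistedSwap

variable {R : Type*} [CommSemiring R]

/-- The `σ`-semilinear endomorphism of `R × R` with `(1, 0) ↦ (0, 1)` and `(0, 1) ↦ (ϖ, 0)`; for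
`σ` the Witt vector Frobenius and `ϖ = p` it is the map `F` of the theorem. -/
def twistedSwap (σ : R →+* R) (ϖ : R) : R × R →ₛₗ[σ] R × R where
  toFun d := (ϖ * σ d.2, σ d.1)
  map_add' d d' := by simp [mul_add]
  map_smul' r d := by simp [mul_left_comm]

variable {σ : R →+* R} {ϖ : R}

@[simp]
theorem twistedSwap_apply (d : R × R) : twistedSwap σ ϖ d = (ϖ * σ d.2, σ d.1) := rfl

theorem twistedSwap_twistedSwap (hσ : σ ϖ = ϖ) (d : R × R) :
    twistedSwap σ ϖ (twistedSwap σ ϖ d) = ϖ • (σ (σ d.1), σ (σ d.2)) := by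
  simp [hσ]

theorem commutes_twistedSwap_iff (M : R × R →ₗ[R] R × R) :
    (∀ d, M (twistedSwap σ ϖ d) = twistedSwap σ ϖ (M d)) ↔
      M (0, 1) = twistedSwap σ ϖ (M (1, 0)) ∧ ϖ • M (1, 0) = twistedSwap σ ϖ (M (0, 1)) := by
  have swap_e₁ : twistedSwap σ ϖ (1, 0) = (0, 1) := by simp
  have swap_e₂ : twistedSwap σ ϖ (0, 1) = ϖ • (1, 0) := by simp
  rw [commutes_iff_forall_basis (.finTwoProd R), Fin.forall_fin_two, Module.Basis.finTwoProd_zero,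
    Module.Basis.finTwoProd_one, swap_e₁, swap_e₂, map_smul]

theorem stmt0_general (hϖ : IsLeftRegular ϖ) (hσ : σ ϖ = ϖ) (M : R × R →ₗ[R] R × R) :
    (∀ d, M (twistedSwap σ ϖ d) = twistedSwap σ ϖ (M d)) ↔
      ∃ a b : R, σ (σ a) = a ∧ σ (σ b) = b ∧ M (1, 0) = (a, b) ∧ M (0, 1) = (ϖ * σ b, σ a) := by
  rw [commutes_twistedSwap_iff]
  constructor
  · rintro ⟨h₁, h₂⟩
    rw [h₁, twistedSwap_twistedSwap hσ] at h₂
    obtain ⟨ha, hb⟩ := Prod.ext_iff.mp h₂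
    exact ⟨_, _, (hϖ ha).symm, (hϖ hb).symm, rfl, h₁⟩
  · rintro ⟨a, b, ha, hb, h₁, h₂⟩
    have h₂' : M (0, 1) = twistedSwap σ ϖ (M (1, 0)) := by rw [h₁, h₂, twistedSwap_apply]
    refine ⟨h₂', ?_⟩
    rw [h₂', twistedSwap_twistedSwap hσ, h₁, ha, hb]

end TwistedSwap

/-- Let `p` be an odd prime, `k` an algebraically closed field of
characteristic `p`, `W = 𝕎(k)` the Witt vectors, `σ` the Witt vector Frobenius.
Let `D = W ⊕ W` with basis `e₁ = (1,0)`, `e₂ = (0,1)` and let `F : D → D` be the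
`σ`-semilinear map with `F e₁ = e₂`, `F e₂ = p • e₁` (so `F (x, y) = (p * σ y, σ x)`).
A `W`-linear endomorphism `M` of `D` commutes with `F` iff there exist `a b ∈ W` fixed by
`σ²` with `M e₁ = a • e₁ + b • e₂` and `M e₂ = p σ(b) • e₁ + σ(a) • e₂`. -/
theorem stmt0 (p : ℕ) [Fact p.Prime] (hp : Odd p)
    (k : Type*) [Field k] [CharP k p] [IsAlgClosed k]
    (σ : WittVector p k →+* WittVector p k) (hσ : σ = WittVector.frobenius)
    (F : WittVector p k × WittVector p k → WittVector p k × WittVector p k)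
    (hF : ∀ x y : WittVector p k, F (x, y) = ((p : WittVector p k) * σ y, σ x))
    (M : (WittVector p k × WittVector p k) →ₗ[WittVector p k]
      (WittVector p k × WittVector p k)) :
    (∀ d, M (F d) = F (M d)) ↔
      ∃ a b : WittVector p k, σ (σ a) = a ∧ σ (σ b) = b ∧
        M (1, 0) = (a, b) ∧ M (0, 1) = ((p : WittVector p k) * σ b, σ a) := by
  obtain rfl : F = twistedSwap σ p := funext fun d ↦ hF d.1 d.2
  exact stmt0_general (IsRegular.of_ne_zero (WittVector.p_nonzero p k)).left (map_natCast σ p) M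
end

section
/- Let a, b ∈ W with σ(a) = −a, a a unit of W, and b ≠ 0. Then the quadratic polynomial f(X) = b·X² + (σ(a) − a)·X − p·σ(b) splits into linear factors over K: f = b·(X − λ)·(X − μ) with λ ∈ W, v(λ) = 1 + v(b), and v(μ) = −v(b). In particular, λ is the unique root of f in K of positive valuation. -/
/-!
Write `f = b X² + c X - q` with `c` a unit and `q = p σ(b)`. The substitution `X = q / s` turns
`f` into the monic polynomial `s² - c s - b q`, which reduces to `s (s - c)` because `p ∣ q`. By
Hensel's lemma the simple root `c` of the reduction lifts to a unit `s` of `W`, and then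
`λ = q / s` and `μ = -s / b` are the two roots of `f`. Since `σ` fixes `p`, it preserves
valuations, so `v λ = v q = 1 + v b`, whereas `v μ = -v b ≤ 0`.
-/

open Polynomial IsLocalRing

section Quadratic

theorem exists_isUnit_sq_sub_mul_sub_eq_zero {R : Type*} [CommRing R] [HenselianLocalRing R]
    {c d : R} (hc : IsUnit c) (hd : d ∈ maximalIdeal R) :
    ∃ s : R, IsUnit s ∧ s ^ 2 - c * s - d = 0 := by
  have hmonic : (X ^ 2 - (C c * X + C d)).Monic :=
    monic_X_pow_sub (degree_linear_le.trans_lt (by norm_num))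
  have heval : (X ^ 2 - (C c * X + C d)).eval c ∈ maximalIdeal R := by
    have heval_eq : (X ^ 2 - (C c * X + C d)).eval c = -d := by
      simp only [eval_sub, eval_add, eval_mul, eval_pow, eval_X, eval_C]
      ring
    exact heval_eq ▸ neg_mem hd
  have hderiv : IsUnit ((X ^ 2 - (C c * X + C d)).derivative.eval c) := by
    have hderiv_eq : (X ^ 2 - (C c * X + C d)).derivative.eval c = c := by
      simp only [derivative_sub, derivative_add, derivative_X_pow, derivative_C_mul,
        derivative_X, derivative_C, eval_sub, eval_add, eval_mul, eval_pow, eval_X, eval_C,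
        eval_one, eval_zero, Nat.cast_ofNat]
      ring
    exact hderiv_eq.symm ▸ hc
  obtain ⟨s, hroot, hsc⟩ := HenselianLocalRing.is_henselian _ hmonic c heval hderiv
  refine ⟨s, ?_, ?_⟩
  · by_contra hs
    have hc_mem : s - (s - c) ∈ maximalIdeal R := sub_mem hs hsc
    exact (sub_sub_cancel s c ▸ hc_mem) hc
  · simpa [sub_sub] using hroot

theorem quadratic_eq_C_mul_X_sub_C_mul_X_sub_C {K : Type*} [Field K] {b c q s : K}
    (hb : b ≠ 0) (hs : s ≠ 0) (h : s ^ 2 - c * s - b * q = 0) :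
    C b * X ^ 2 + C c * X - C q = C b * (X - C (q / s)) * (X - C (-s / b)) := by
  have hsum : c = -(b * (q / s + -s / b)) := by
    field_simp
    linear_combination -h
  have hprod : q = -(b * (q / s * (-s / b))) := by field_simp
  calc C b * X ^ 2 + C c * X - C q
      = C b * X ^ 2 + C (-(b * (q / s + -s / b))) * X - C (-(b * (q / s * (-s / b)))) := by
        rw [← hsum, ← hprod]
    _ = C b * (X - C (q / s)) * (X - C (-s / b)) := by
        simp only [C_neg, C_add, C_mul]
        ring

theorem exists_units_quadratic_eq_C_mul_X_sub_C_mul_X_sub_C {R K : Type*} [CommRing R]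
    [HenselianLocalRing R] [Field K] [Algebra R K] {b c q : R} (hc : IsUnit c)
    (hb : algebraMap R K b ≠ 0) (hbq : b * q ∈ maximalIdeal R) :
    ∃ s : Rˣ, C (algebraMap R K b) * X ^ 2 + C (algebraMap R K c) * X - C (algebraMap R K q) =
      C (algebraMap R K b) * (X - C (algebraMap R K (q * ↑s⁻¹))) *
        (X - C (-algebraMap R K s / algebraMap R K b)) := by
  obtain ⟨_, ⟨s, rfl⟩, hs⟩ := exists_isUnit_sq_sub_mul_sub_eq_zero hc hbq
  have hs_ne_zero : algebraMap R K s ≠ 0 := (s.isUnit.map (algebraMap R K)).ne_zero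
  have hlam : algebraMap R K (q * ↑s⁻¹) = algebraMap R K q / algebraMap R K s := by
    rw [eq_div_iff hs_ne_zero, ← map_mul, Units.inv_mul_cancel_right]
  refine ⟨s, hlam ▸ quadratic_eq_C_mul_X_sub_C_mul_X_sub_C hb hs_ne_zero ?_⟩
  simpa using congrArg (algebraMap R K) hs

theorem eq_of_isRoot_C_mul_X_sub_C_mul_X_sub_C_of_pos {K Γ : Type*} [Field K] [AddCommMonoid Γ]
    [PartialOrder Γ] [IsOrderedAddMonoid Γ] {v : K → Γ} {b lam mu x : K} (hb : b ≠ 0)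
    (hvb : 0 ≤ v b) (hmu : v mu + v b = 0)
    (hx : (C b * (X - C lam) * (X - C mu)).IsRoot x) (hvx : 0 < v x) : x = lam := by
  have hlam_or_mu : x = lam ∨ x = mu := by
    simpa [hb, sub_eq_zero] using hx
  refine hlam_or_mu.resolve_right ?_
  rintro rfl
  exact (add_pos_of_pos_of_nonneg hvx hvb).ne' hmu

end Quadratic

section DiscreteValuationRing

theorem apply_unit_mul_pow_eq_nsmul {M Γ : Type*} [Monoid M] [AddMonoid Γ] {w : M → Γ}
    (hwmul : ∀ x y, w (x * y) = w x + w y) (hwu : ∀ u, IsUnit u → w u = 0) {u : M}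
    (hu : IsUnit u) (x : M) (n : ℕ) : w (u * x ^ n) = n • w x := by
  induction n with
  | zero => simpa using hwu u hu
  | succ n ih => rw [pow_succ, ← mul_assoc, hwmul, ih, succ_nsmul]

variable {R Γ : Type*} [CommRing R] [IsDomain R] [IsDiscreteValuationRing R] [AddCommMonoid Γ]
  {w : R → Γ} {ϖ b : R}

theorem apply_nonneg_of_irreducible_nonneg [PartialOrder Γ] [IsOrderedAddMonoid Γ]
    (hwmul : ∀ x y, w (x * y) = w x + w y) (hwu : ∀ u, IsUnit u → w u = 0)
    (hϖ : Irreducible ϖ) (hwϖ : 0 ≤ w ϖ) (hb : b ≠ 0) : 0 ≤ w b := by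
  obtain ⟨n, u, rfl⟩ := IsDiscreteValuationRing.eq_unit_mul_pow_irreducible hb hϖ
  rw [apply_unit_mul_pow_eq_nsmul hwmul hwu u.isUnit]
  exact nsmul_nonneg hwϖ n

theorem apply_map_eq_apply_of_map_irreducible_eq {F : Type*} [FunLike F R R]
    [MonoidHomClass F R R] (hwmul : ∀ x y, w (x * y) = w x + w y)
    (hwu : ∀ u, IsUnit u → w u = 0) (hϖ : Irreducible ϖ) {σ : F} (hσϖ : σ ϖ = ϖ) (hb : b ≠ 0) :
    w (σ b) = w b := by
  obtain ⟨n, u, rfl⟩ := IsDiscreteValuationRing.eq_unit_mul_pow_irreducible hb hϖ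
  rw [map_mul, map_pow, hσϖ, apply_unit_mul_pow_eq_nsmul hwmul hwu (u.isUnit.map σ),
    apply_unit_mul_pow_eq_nsmul hwmul hwu u.isUnit]

end DiscreteValuationRing

theorem stmt2_general {R K F : Type*} [CommRing R] [IsDomain R] [IsDiscreteValuationRing R]
    [HenselianLocalRing R] [Field K] [Algebra R K] [FaithfulSMul R K] [FunLike F R R]
    [MonoidHomClass F R R] {ϖ : R} (hϖ : Irreducible ϖ) {σ : F} (hσϖ : σ ϖ = ϖ)
    {v : K → WithTop ℤ} (hvmul : ∀ x y : K, v (x * y) = v x + v y)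
    (hvϖ : v (algebraMap R K ϖ) = 1) (hvu : ∀ u : R, IsUnit u → v (algebraMap R K u) = 0)
    {b c : R} (hc : IsUnit c) (hb : b ≠ 0) :
    ∃ lam mu : K,
      (∃ w : R, algebraMap R K w = lam) ∧
      (C (algebraMap R K b) * X ^ 2 + C (algebraMap R K c) * X - C (algebraMap R K (ϖ * σ b))
        = C (algebraMap R K b) * (X - C lam) * (X - C mu)) ∧
      v lam = 1 + v (algebraMap R K b) ∧
      v mu + v (algebraMap R K b) = 0 ∧
      (∀ x : K,
        (C (algebraMap R K b) * X ^ 2 + C (algebraMap R K c) * X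
          - C (algebraMap R K (ϖ * σ b))).IsRoot x → 0 < v x → x = lam) := by
  have hb' : algebraMap R K b ≠ 0 := by simpa using hb
  have hwmul (x y : R) :
      v (algebraMap R K (x * y)) = v (algebraMap R K x) + v (algebraMap R K y) := by
    rw [map_mul, hvmul]
  have hvσb : v (algebraMap R K (σ b)) = v (algebraMap R K b) :=
    apply_map_eq_apply_of_map_irreducible_eq hwmul hvu hϖ hσϖ hb
  have hvb : 0 ≤ v (algebraMap R K b) :=
    apply_nonneg_of_irreducible_nonneg (w := fun r ↦ v (algebraMap R K r)) hwmul hvu hϖ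
      (hvϖ ▸ zero_le_one) hb
  have hbq : b * (ϖ * σ b) ∈ maximalIdeal R :=
    Ideal.mul_mem_left _ _ (Ideal.mul_mem_right _ _ hϖ.not_isUnit)
  obtain ⟨s, hfactor⟩ := exists_units_quadratic_eq_C_mul_X_sub_C_mul_X_sub_C hc hb' hbq
  have hvmu : v (-algebraMap R K s / algebraMap R K b) + v (algebraMap R K b) = 0 := by
    rw [← hvmul, div_mul_cancel₀ _ hb', ← map_neg, hvu _ s.isUnit.neg]
  refine ⟨_, _, ⟨_, rfl⟩, hfactor, ?_, hvmu, fun x hx hvx ↦ ?_⟩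
  · rw [hwmul, hwmul, hvϖ, hvσb, hvu _ s⁻¹.isUnit, add_zero]
  · exact eq_of_isRoot_C_mul_X_sub_C_mul_X_sub_C_of_pos hb' hvb hvmu (hfactor ▸ hx) hvx

theorem isUnit_two_of_odd_of_not_isUnit_natCast {R : Type*} [CommRing R] [IsLocalRing R] {n : ℕ}
    (hn : Odd n) (hnR : ¬IsUnit (n : R)) : IsUnit (2 : R) := by
  obtain ⟨m, rfl⟩ := hn
  have hsum : IsUnit (((2 * m + 1 : ℕ) : R) + 2 * -(m : R)) := by
    rw [show ((2 * m + 1 : ℕ) : R) + 2 * -(m : R) = 1 by push_cast; ring]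
    exact isUnit_one
  exact isUnit_of_mul_isUnit_left ((isUnit_or_isUnit_of_isUnit_add hsum).resolve_left hnR)

theorem isUnit_neg_sub_self {R : Type*} [CommRing R] {a : R} (h2 : IsUnit (2 : R))
    (ha : IsUnit a) : IsUnit (-a - a) := by
  rw [show -a - a = -(2 * a) by ring]
  exact (h2.mul ha).neg

instance instHenselianLocalRingWittVector {p : ℕ} [Fact p.Prime] {k : Type*} [Field k] [CharP k p]
    [PerfectRing k p] : HenselianLocalRing (WittVector p k) where
  is_henselian f hf a₀ hroot hderiv := by
    rw [(WittVector.irreducible p).maximalIdeal_eq] at hroot ⊢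
    exact HenselianRing.is_henselian f hf a₀ hroot (hderiv.map _)

open Polynomial in
/-- Let `W = 𝕎(k)` (`k` algebraically closed of odd characteristic `p`),
`σ` the Witt Frobenius, `K = Frac(W)`, and `v` the normalized discrete valuation on `K`
(characterized by multiplicativity, `v p = 1`, `v u = 0` for units `u` of `W`, and
`v x = ⊤ ↔ x = 0`).  Let `a, b ∈ W` with `σ a = -a`, `a` a unit, `b ≠ 0`.  Then
`f(X) = b X² + (σ(a) - a) X - p σ(b)` splits over `K` as `b (X - λ)(X - μ)` with `λ ∈ W`,
`v λ = 1 + v b`, `v μ = -v b` (i.e. `v μ + v b = 0`); and `λ` is the unique root of `f`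
in `K` of positive valuation. -/
theorem stmt2 (p : ℕ) [Fact p.Prime] (hp : Odd p)
    (k : Type*) [Field k] [CharP k p] [IsAlgClosed k]
    (σ : WittVector p k →+* WittVector p k) (hσ : σ = WittVector.frobenius)
    (K : Type*) [Field K] [Algebra (WittVector p k) K]
    [IsFractionRing (WittVector p k) K]
    (v : K → WithTop ℤ)
    (hv0 : ∀ x : K, v x = ⊤ ↔ x = 0)
    (hvmul : ∀ x y : K, v (x * y) = v x + v y)
    (hvp : v (algebraMap (WittVector p k) K p) = 1)
    (hvu : ∀ u : WittVector p k, IsUnit u → v (algebraMap (WittVector p k) K u) = 0)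
    (a b : WittVector p k) (haneg : σ a = -a) (haunit : IsUnit a) (hb : b ≠ 0) :
    ∃ lam mu : K,
      (∃ w : WittVector p k, algebraMap (WittVector p k) K w = lam) ∧
      (C (algebraMap (WittVector p k) K b) * X ^ 2
          + C (algebraMap (WittVector p k) K (σ a - a)) * X
          - C (algebraMap (WittVector p k) K ((p : WittVector p k) * σ b))
        = C (algebraMap (WittVector p k) K b) * (X - C lam) * (X - C mu)) ∧
      v lam = 1 + v (algebraMap (WittVector p k) K b) ∧
      v mu + v (algebraMap (WittVector p k) K b) = 0 ∧
      (∀ x : K,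
        (C (algebraMap (WittVector p k) K b) * X ^ 2
            + C (algebraMap (WittVector p k) K (σ a - a)) * X
            - C (algebraMap (WittVector p k) K ((p : WittVector p k) * σ b))).IsRoot x →
        0 < v x → x = lam) := by
  have h2 : IsUnit (2 : WittVector p k) :=
    isUnit_two_of_odd_of_not_isUnit_natCast hp (WittVector.irreducible p).not_isUnit
  exact stmt2_general (WittVector.irreducible p) (map_natCast σ p) hvmul hvp hvu
    (haneg ▸ isUnit_neg_sub_self h2 haunit) hb
end

section
/- Let a, b ∈ W with σ(a) = −a, v(a) ≥ 1, and b a unit of W. Then the quadratic polynomial f(X) = b·X² + (σ(a) − a)·X − p·σ(b) is irreducible over K. Moreover, f has a root in the quadratic extension L = K[Y]/(Y² − p), and every root c ∈ L of f satisfies: both c²/p and p/c² are integral over W (so c has valuation 1/2 in the unique extension of v to L). -/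
/-!
Since `p ∣ a`, the middle coefficient `σ(a) - a` has the form `p m`, so
`f = b X² + p m X - p σ(b)` is Eisenstein at `p` with unit leading coefficient, whence the
irreducibility. Its discriminant is `p` times the unit `p m² + 4 b σ(b)`, which is a square by
Hensel's lemma, so the quadratic formula yields a root once `p` has a square root. A root `c` is
integral over `W` because `b` is a unit, so `c² / p = b⁻¹ (σ(b) - m c)` is integral; likewise
`p / c = σ(b)⁻¹ (b c + p m)` is integral and `p / c² = σ(b)⁻¹ (b + m (p / c))`.
-/

section

open Polynomial

section UnitLeadingCoeff

variable {R : Type*} [CommRing R] {f : R[X]}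

theorem exists_isUnit_monic_C_mul (hf : IsUnit f.leadingCoeff) :
    ∃ r : R, IsUnit r ∧ (C r * f).Monic := by
  obtain ⟨r, hr⟩ := hf.exists_left_inv
  exact ⟨r, .of_mul_eq_one _ hr, monic_C_mul_of_mul_leadingCoeff_eq_one hr⟩

theorem isPrimitive_of_isUnit_leadingCoeff (hf : IsUnit f.leadingCoeff) : f.IsPrimitive :=
  fun _ hr ↦ isUnit_of_dvd_unit ((C_dvd_iff_dvd_coeff _ _).1 hr _) hf

theorem isIntegral_of_aeval_eq_zero_of_isUnit_leadingCoeff {S : Type*} [CommRing S] [Algebra R S]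
    (hf : IsUnit f.leadingCoeff) {c : S} (hc : aeval c f = 0) : IsIntegral R c := by
  obtain ⟨r, -, hmonic⟩ := exists_isUnit_monic_C_mul hf
  exact ⟨C r * f, hmonic, by rw [← aeval_def, map_mul, hc, mul_zero]⟩

theorem irreducible_map_of_isEisensteinAt [IsDomain R] [IsIntegrallyClosed R]
    (K : Type*) [Field K] [Algebra R K] [IsFractionRing R K] {P : Ideal R} (hP : P.IsPrime)
    (hf : f.IsEisensteinAt P) (hlead : IsUnit f.leadingCoeff) (hdeg : 0 < f.natDegree) :
    Irreducible (f.map (algebraMap R K)) := by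
  obtain ⟨r, hr, hmonic⟩ := exists_isUnit_monic_C_mul hlead
  have hirr : Irreducible (C r * f) :=
    (irreducible_isUnit_mul (hr.map C)).2
      (hf.irreducible hP (isPrimitive_of_isUnit_leadingCoeff hlead) hdeg)
  rw [hmonic.irreducible_iff_irreducible_map_fraction_map (K := K), Polynomial.map_mul, map_C,
    irreducible_isUnit_mul ((hr.map (algebraMap R K)).map C)] at hirr
  exact hirr

end UnitLeadingCoeff

/-- The quadratic polynomial `b X² + π m X + π d`. For `π` prime and `b`, `d` units these are the
quadratics that are Eisenstein at `(π)` with unit leading coefficient and constant term `π` times a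
unit; factoring `π` out of the lower coefficients makes the divisibility part of the data. -/
noncomputable def eisensteinQuadratic {R : Type*} [CommRing R] (π b m d : R) : R[X] :=
  C b * X ^ 2 + C (π * m) * X + C (π * d)

section EisensteinQuadratic

variable {R : Type*} [CommRing R] {π b m d : R}

theorem leadingCoeff_eisensteinQuadratic (hb : IsUnit b) :
    (eisensteinQuadratic π b m d).leadingCoeff = b := by
  nontriviality R
  exact leadingCoeff_quadratic hb.ne_zero

theorem isEisensteinAt_eisensteinQuadratic [IsDomain R] (hπ : Prime π) (hb : IsUnit b)
    (hd : IsUnit d) : (eisensteinQuadratic π b m d).IsEisensteinAt (Ideal.span {π}) where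
  leading := by
    rw [leadingCoeff_eisensteinQuadratic hb, Ideal.mem_span_singleton]
    exact fun h ↦ hπ.not_isUnit (isUnit_of_dvd_unit h hb)
  mem {n} hn := by
    rw [eisensteinQuadratic, natDegree_quadratic hb.ne_zero] at hn
    rw [Ideal.mem_span_singleton]
    interval_cases n <;> simp [eisensteinQuadratic, coeff_X, coeff_C]
  notMem := by
    have hcoeff : (eisensteinQuadratic π b m d).coeff 0 = π * d := by simp [eisensteinQuadratic]
    rw [hcoeff, Ideal.span_singleton_pow, Ideal.mem_span_singleton, sq,
      mul_dvd_mul_iff_left hπ.ne_zero]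
    exact fun h ↦ hπ.not_isUnit (isUnit_of_dvd_unit h hd)

theorem irreducible_map_eisensteinQuadratic [IsDomain R] [IsIntegrallyClosed R]
    (K : Type*) [Field K] [Algebra R K] [IsFractionRing R K] (hπ : Prime π) (hb : IsUnit b)
    (hd : IsUnit d) : Irreducible ((eisensteinQuadratic π b m d).map (algebraMap R K)) := by
  refine irreducible_map_of_isEisensteinAt K ((Ideal.span_singleton_prime hπ.ne_zero).2 hπ)
    (isEisensteinAt_eisensteinQuadratic hπ hb hd) ?_ ?_
  · rwa [leadingCoeff_eisensteinQuadratic hb]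
  · rw [eisensteinQuadratic, natDegree_quadratic hb.ne_zero]
    exact two_pos

variable {S : Type*} [CommRing S] [Algebra R S]

theorem aeval_eisensteinQuadratic (c : S) :
    aeval c (eisensteinQuadratic π b m d) =
      algebraMap R S b * c ^ 2 + algebraMap R S π * algebraMap R S m * c +
        algebraMap R S π * algebraMap R S d := by
  simp [eisensteinQuadratic]

theorem exists_aeval_eisensteinQuadratic_eq_zero (h2 : IsUnit (2 : R)) (hb : IsUnit b)
    (hsq : IsSquare (π * m ^ 2 - 4 * b * d)) {y : S} (hy : y ^ 2 = algebraMap R S π) :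
    ∃ c : S, aeval c (eisensteinQuadratic π b m d) = 0 := by
  obtain ⟨s, hs⟩ := hsq
  obtain ⟨e, he⟩ := (h2.mul hb).exists_right_inv
  replace hs := congrArg (algebraMap R S) hs
  replace he := congrArg (algebraMap R S) he
  simp only [map_sub, map_mul, map_pow, map_ofNat, map_one] at hs he
  let c := algebraMap R S e * (algebraMap R S s * y - algebraMap R S π * algebraMap R S m)
  have hc : 2 * algebraMap R S b * c =
      algebraMap R S s * y - algebraMap R S π * algebraMap R S m := by
    linear_combination (algebraMap R S s * y - algebraMap R S π * algebraMap R S m) * he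
  refine ⟨c, ?_⟩
  have hunit : IsUnit (2 * (2 * algebraMap R S b)) := by
    simpa only [map_mul, map_ofNat] using (h2.mul (h2.mul hb)).map (algebraMap R S)
  rw [aeval_eisensteinQuadratic, ← hunit.mul_right_eq_zero]
  linear_combination
    (2 * algebraMap R S b * c + algebraMap R S s * y + algebraMap R S π * algebraMap R S m) * hc
      + algebraMap R S s ^ 2 * hy - algebraMap R S π * hs

theorem isIntegral_of_aeval_eisensteinQuadratic_eq_zero (hb : IsUnit b) {c : S}
    (hc : aeval c (eisensteinQuadratic π b m d) = 0) : IsIntegral R c :=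
  isIntegral_of_aeval_eq_zero_of_isUnit_leadingCoeff
    (by rwa [leadingCoeff_eisensteinQuadratic hb]) hc

theorem exists_isIntegral_mul_eq_sq_of_aeval_eq_zero (hb : IsUnit b) {c : S}
    (hc : aeval c (eisensteinQuadratic π b m d) = 0) :
    ∃ u, IsIntegral R u ∧ algebraMap R S π * u = c ^ 2 := by
  have hint := isIntegral_of_aeval_eisensteinQuadratic_eq_zero hb hc
  obtain ⟨b', hb'⟩ := hb.exists_right_inv
  replace hb' := congrArg (algebraMap R S) hb'
  rw [map_mul, map_one] at hb'
  rw [aeval_eisensteinQuadratic] at hc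
  refine ⟨-algebraMap R S b' * (algebraMap R S d + algebraMap R S m * c),
    isIntegral_algebraMap.neg.mul
      (isIntegral_algebraMap.add (isIntegral_algebraMap.mul hint)), ?_⟩
  linear_combination c ^ 2 * hb' - algebraMap R S b' * hc

theorem exists_isIntegral_sq_mul_eq_of_aeval_eq_zero (hb : IsUnit b) (hd : IsUnit d) {c : S}
    (hc : aeval c (eisensteinQuadratic π b m d) = 0) :
    ∃ w, IsIntegral R w ∧ c ^ 2 * w = algebraMap R S π := by
  have hint := isIntegral_of_aeval_eisensteinQuadratic_eq_zero hb hc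
  obtain ⟨d', hd'⟩ := hd.exists_right_inv
  replace hd' := congrArg (algebraMap R S) hd'
  rw [map_mul, map_one] at hd'
  rw [aeval_eisensteinQuadratic] at hc
  obtain ⟨t, ht_int, ht⟩ : ∃ t, IsIntegral R t ∧ c * t = algebraMap R S π := by
    refine ⟨-algebraMap R S d' * (algebraMap R S b * c + algebraMap R S π * algebraMap R S m),
      isIntegral_algebraMap.neg.mul ((isIntegral_algebraMap.mul hint).add
        (isIntegral_algebraMap.mul isIntegral_algebraMap)), ?_⟩
    linear_combination algebraMap R S π * hd' - algebraMap R S d' * hc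
  refine ⟨-algebraMap R S d' * (algebraMap R S b + algebraMap R S m * t),
    isIntegral_algebraMap.neg.mul
      (isIntegral_algebraMap.add (isIntegral_algebraMap.mul ht_int)), ?_⟩
  linear_combination algebraMap R S π * hd' - algebraMap R S d' * hc
    - algebraMap R S d' * algebraMap R S m * c * ht

end EisensteinQuadratic

theorem isUnit_sub_of_not_isUnit_of_isUnit {R : Type*} [CommRing R] [IsLocalRing R] {x y : R}
    (hx : ¬IsUnit x) (hy : IsUnit y) : IsUnit (x - y) := by
  rw [← neg_sub, IsUnit.neg_iff]
  exact (IsLocalRing.isUnit_or_isUnit_of_isUnit_add (by rwa [sub_add_cancel])).resolve_right hx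

universe u

theorem isSquare_of_isSquare_map {R : Type u} [CommRing R] [HenselianLocalRing R] {k : Type u}
    [Field k] {φ : R →+* k} (hφ : Function.Surjective φ) (h2 : IsUnit (2 : R)) {r : R}
    (hr : IsUnit r) (hsq : IsSquare (φ r)) : IsSquare r := by
  obtain ⟨z, hz⟩ := hsq
  have hz0 : z ≠ 0 := by
    rintro rfl
    exact (hr.map φ).ne_zero (by rw [hz, mul_zero])
  have hensel := ((HenselianLocalRing.TFAE R).out 0 2).1 ‹_›
  obtain ⟨s, hs, -⟩ := hensel φ hφ (X ^ 2 - C r) (monic_X_pow_sub_C r two_ne_zero) z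
    (by simp [hz, sq]) (by simpa [one_add_one_eq_two] using ⟨(h2.map φ).ne_zero, hz0⟩)
  rw [IsRoot.def, eval_sub, eval_pow, eval_X, eval_C, sub_eq_zero] at hs
  exact ⟨s, by rw [← hs, sq]⟩

section WittVector

variable (p : ℕ) [Fact p.Prime] (k : Type*) [Field k] [CharP k p]

theorem isUnit_two_wittVector (hp : Odd p) : IsUnit (2 : WittVector p k) := by
  have h2 : (2 : k) ≠ 0 := Ring.two_ne_zero (by
    rw [ringChar.eq k p]
    rintro rfl
    exact absurd hp (by decide))
  apply WittVector.isUnit_of_coeff_zero_ne_zero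
  rwa [← WittVector.constantCoeff_apply, map_ofNat]

theorem henselianLocalRing_wittVector [PerfectRing k p] : HenselianLocalRing (WittVector p k) where
  is_henselian f hf x hx hunit := by
    have hmax : IsLocalRing.maximalIdeal (WittVector p k) = Ideal.span {(p : WittVector p k)} :=
      (WittVector.irreducible p).maximalIdeal_eq
    rw [hmax] at hx ⊢
    exact HenselianRing.is_henselian f hf x hx (hunit.map _)

theorem isSquare_of_isUnit_wittVector [IsAlgClosed k] (hp : Odd p) {r : WittVector p k}
    (hr : IsUnit r) : IsSquare r :=
  have := henselianLocalRing_wittVector p k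
  isSquare_of_isSquare_map (WittVector.constantCoeff_surjective p) (isUnit_two_wittVector p k hp)
    hr (IsAlgClosed.exists_eq_mul_self _)

end WittVector

theorem stmt3_general {R K L : Type*} [CommRing R] [IsDomain R] [IsIntegrallyClosed R]
    [IsLocalRing R] [Field K] [Algebra R K] [IsFractionRing R K] [CommRing L] [Algebra R L]
    (h2 : IsUnit (2 : R)) (hsq : ∀ r : R, IsUnit r → IsSquare r) {π b d : R} (m : R)
    (hπ : Prime π) (hb : IsUnit b) (hd : IsUnit d) {y : L} (hy : y ^ 2 = algebraMap R L π) :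
    Irreducible ((eisensteinQuadratic π b m d).map (algebraMap R K)) ∧
    (∃ c : L, aeval c (eisensteinQuadratic π b m d) = 0) ∧
    (∀ c : L, aeval c (eisensteinQuadratic π b m d) = 0 →
      (∃ u, IsIntegral R u ∧ algebraMap R L π * u = c ^ 2) ∧
      (∃ w, IsIntegral R w ∧ c ^ 2 * w = algebraMap R L π)) := by
  have hπm : ¬IsUnit (π * m ^ 2) := fun h ↦ hπ.not_isUnit (isUnit_of_mul_isUnit_left h)
  have h4bd : IsUnit (4 * b * d) := by
    rw [show (4 : R) = 2 * 2 by norm_num]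
    exact ((h2.mul h2).mul hb).mul hd
  have hdisc := hsq _ (isUnit_sub_of_not_isUnit_of_isUnit hπm h4bd)
  exact ⟨irreducible_map_eisensteinQuadratic K hπ hb hd,
    exists_aeval_eisensteinQuadratic_eq_zero h2 hb hdisc hy,
    fun _ hc ↦ ⟨exists_isIntegral_mul_eq_sq_of_aeval_eq_zero hb hc,
      exists_isIntegral_sq_mul_eq_of_aeval_eq_zero hb hd hc⟩⟩

end

open Polynomial in
/-- Let `W = 𝕎(k)` (`k` algebraically closed of odd characteristic `p`),
`σ` the Witt Frobenius, `K = Frac(W)`.  Let `a, b ∈ W` with `σ a = -a`, `v(a) ≥ 1`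
(i.e. `p ∣ a`), and `b` a unit of `W`.  Then `f(X) = b X² + (σ(a) - a) X - p σ(b)` is
irreducible over `K`; it has a root in `L = K[Y]/(Y² - p)`, and every root `c ∈ L` of `f`
satisfies: both `c²/p` and `p/c²` are integral over `W` (phrased division-free: there are
integral `u, w ∈ L` with `p·u = c²` and `c²·w = p`). -/
theorem stmt3 (p : ℕ) [Fact p.Prime] (hp : Odd p)
    (k : Type*) [Field k] [CharP k p] [IsAlgClosed k]
    (σ : WittVector p k →+* WittVector p k) (hσ : σ = WittVector.frobenius)
    (K : Type*) [Field K] [Algebra (WittVector p k) K]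
    [IsFractionRing (WittVector p k) K]
    (a b : WittVector p k) (haneg : σ a = -a)
    (ha : (p : WittVector p k) ∣ a) (hbunit : IsUnit b) :
    Irreducible
      (C (algebraMap (WittVector p k) K b) * X ^ 2
        + C (algebraMap (WittVector p k) K (σ a - a)) * X
        - C (algebraMap (WittVector p k) K ((p : WittVector p k) * σ b))) ∧
    (∃ c : AdjoinRoot (X ^ 2 - C (algebraMap (WittVector p k) K (p : WittVector p k))),
      Polynomial.aeval c
        (C (algebraMap (WittVector p k) K b) * X ^ 2
          + C (algebraMap (WittVector p k) K (σ a - a)) * X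
          - C (algebraMap (WittVector p k) K ((p : WittVector p k) * σ b))) = 0) ∧
    (∀ c : AdjoinRoot (X ^ 2 - C (algebraMap (WittVector p k) K (p : WittVector p k))),
      Polynomial.aeval c
        (C (algebraMap (WittVector p k) K b) * X ^ 2
          + C (algebraMap (WittVector p k) K (σ a - a)) * X
          - C (algebraMap (WittVector p k) K ((p : WittVector p k) * σ b))) = 0 →
      (∃ u, IsIntegral (WittVector p k) u ∧
        algebraMap K _ (algebraMap (WittVector p k) K (p : WittVector p k)) * u = c ^ 2) ∧
      (∃ w, IsIntegral (WittVector p k) w ∧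
        c ^ 2 * w = algebraMap K _ (algebraMap (WittVector p k) K (p : WittVector p k)))) := by
  obtain ⟨a', rfl⟩ := ha
  have hquad : C (algebraMap (WittVector p k) K b) * X ^ 2
      + C (algebraMap (WittVector p k) K (σ (p * a') - p * a')) * X
      - C (algebraMap (WittVector p k) K ((p : WittVector p k) * σ b)) =
      (eisensteinQuadratic (p : WittVector p k) b (σ a' - a') (-σ b)).map
        (algebraMap (WittVector p k) K) := by
    simp [eisensteinQuadratic, mul_add, sub_eq_add_neg]
  have hroot := AdjoinRoot.eval₂_root (X ^ 2 - C (algebraMap (WittVector p k) K p))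
  rw [eval₂_sub, eval₂_pow, eval₂_X, eval₂_C, sub_eq_zero] at hroot
  simp only [hquad, aeval_map_algebraMap, ← IsScalarTower.algebraMap_apply]
  exact stmt3_general (isUnit_two_wittVector p k hp)
    (fun _ ↦ isSquare_of_isUnit_wittVector p k hp) _ (WittVector.irreducible p).prime hbunit
    (hbunit.map σ).neg hroot
end

section
/- Let R ⊆ K be a subring with c(R) = R, and let L, I, J be ℤ-submodules of K satisfying R·L ⊆ L, R·I ⊆ I, R·J ⊆ J, I·J = R, and c(I) = I. Then the dual of the product satisfies (I·L)* = J·L*. -/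
/-- The dual lattice `M* = {x ∈ K : Tr_{K/ℚ}(λ·x·c(y)) ∈ ℤ for all y ∈ M}` of a
`ℤ`-submodule `M` of a number field `K`, with respect to the pairing
`(x, y) ↦ Tr_{K/ℚ}(λ·x·c(y))`. -/
noncomputable def dualLattice (K : Type*) [Field K] [Algebra ℚ K] [FiniteDimensional ℚ K]
    (c : K →ₐ[ℚ] K) (lam : K) (M : Submodule ℤ K) : Submodule ℤ K :=
  ⨅ y ∈ M, Submodule.comap
    (((Algebra.trace ℚ K).restrictScalars ℤ) ∘ₗ LinearMap.mulLeft ℤ (lam * c y))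
    (Submodule.span ℤ {(1 : ℚ)})

/-!
The map `c` is multiplicative, so `Tr (λ · x · c (i l)) = Tr (λ · (x · c i) · c l)`. Hence duality
turns products into quotients of submodules: `(I · L)* = L* / c(I)`. Taking `R` for `I`, the
inclusion `R · L ⊆ L` dualizes to `c(R) · L* ⊆ L*`. Finally, if `c(I) · J = c(R)` contains `1` and
stabilizes `L*`, then dividing `L*` by `c(I)` is the same as multiplying it by `J`.
-/

section SubmoduleQuotient

variable {A B : Type*} [CommSemiring A] [CommSemiring B] [Algebra A B] {I J M : Submodule A B}

theorem submodule_div_eq_mul_of_one_le_mul (hone : 1 ≤ I * J) (hM : I * J * M ≤ M) :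
    M / I = J * M := by
  apply le_antisymm
  · calc M / I = 1 * (M / I) := (one_mul _).symm
      _ ≤ I * J * (M / I) := by gcongr
      _ = J * (M / I * I) := by ring
      _ ≤ J * M := mul_le_mul_right (Submodule.le_div_iff_mul_le.mp le_rfl) J
  · rw [Submodule.le_div_iff_mul_le]
    calc J * M * I = I * J * M := by ring
      _ ≤ M := hM

end SubmoduleQuotient

section DualLattice

variable {K : Type*} [Field K] [Algebra ℚ K] [FiniteDimensional ℚ K]
  {c : K →ₐ[ℚ] K} {lam : K} {M N : Submodule ℤ K}

theorem mem_dualLattice {x : K} :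
    x ∈ dualLattice K c lam M ↔
      ∀ y ∈ M, Algebra.trace ℚ K (lam * c y * x) ∈ Submodule.span ℤ {(1 : ℚ)} := by
  simp [dualLattice, mul_assoc]

theorem dualLattice_anti (h : M ≤ N) : dualLattice K c lam N ≤ dualLattice K c lam M :=
  biInf_mono h

theorem dualLattice_mul :
    dualLattice K c lam (M * N) =
      dualLattice K c lam N / M.map (c.toLinearMap.restrictScalars ℤ) := by
  ext x
  have trace_arg (m n : K) : lam * c (m * n) * x = lam * c n * (x * c m) := by
    rw [map_mul]
    ring
  rw [Submodule.mem_div_iff_forall_mul_mem, mem_dualLattice]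
  constructor
  · rintro hx _ ⟨m, hm, rfl⟩
    refine mem_dualLattice.mpr fun n hn => ?_
    exact trace_arg m n ▸ hx (m * n) (Submodule.mul_mem_mul hm hn)
  · intro hx y hy
    induction hy using Submodule.mul_induction_on' with
    | mem_mul_mem m hm n hn =>
      rw [trace_arg]
      exact mem_dualLattice.mp (hx _ (Submodule.mem_map_of_mem hm)) n hn
    | add y _ z _ hy hz =>
      rw [map_add, mul_add, add_mul, map_add]
      exact add_mem hy hz

theorem dualLattice_mul_map_le (h : M * N ≤ N) :
    dualLattice K c lam N * M.map (c.toLinearMap.restrictScalars ℤ) ≤ dualLattice K c lam N := by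
  rw [← Submodule.le_div_iff_mul_le, ← dualLattice_mul]
  exact dualLattice_anti h

theorem stmt8_general {R L I J : Submodule ℤ K} (hR1 : (1 : K) ∈ R) (hRL : R * L ≤ L)
    (hIJ : I.map (c.toLinearMap.restrictScalars ℤ) * J =
      R.map (c.toLinearMap.restrictScalars ℤ)) :
    dualLattice K c lam (I * L) = J * dualLattice K c lam L := by
  rw [dualLattice_mul]
  apply submodule_div_eq_mul_of_one_le_mul
  · rw [hIJ, Submodule.one_le]
    exact ⟨1, hR1, map_one c⟩
  · rw [hIJ, mul_comm]
    exact dualLattice_mul_map_le hRL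

end DualLattice

/-- Let `K` be a number field, `c` a `ℚ`-algebra involution of `K`,
`λ ∈ K` nonzero.  Let `R ⊆ K` be a subring (a `ℤ`-submodule containing `1` and closed
under multiplication) with `c(R) = R`, and let `L, I, J` be `ℤ`-submodules of `K` with
`R·L ⊆ L`, `R·I ⊆ I`, `R·J ⊆ J`, `I·J = R` and `c(I) = I`.  Then `(I·L)* = J·L*`. -/
theorem stmt8 (K : Type*) [Field K] [NumberField K]
    (c : K →ₐ[ℚ] K) (hc : ∀ x : K, c (c x) = x) (lam : K) (hlam : lam ≠ 0)
    (R : Submodule ℤ K) (hR1 : (1 : K) ∈ R) (hRmul : R * R ≤ R)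
    (hcR : R.map (c.toLinearMap.restrictScalars ℤ) = R)
    (L I J : Submodule ℤ K)
    (hRL : R * L ≤ L) (hRI : R * I ≤ I) (hRJ : R * J ≤ J)
    (hIJ : I * J = R)
    (hcI : I.map (c.toLinearMap.restrictScalars ℤ) = I) :
    dualLattice K c lam (I * L) = J * dualLattice K c lam L :=
  stmt8_general hR1 hRL (by rw [hcI, hcR, hIJ])
end

section
/- If e ≤ p − 1, then for every x ∈ m_L and every integer n ≥ 1, the element x^n / n! of L lies in m_L. (In particular, the maximal ideal of the ring of integers of a slightly ramified extension of ℚ_p is closed under divided powers.) -/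
/-!
By Legendre's formula `(p - 1) * v_p(n!) < n`, so `e ≤ p - 1` gives `e * v_p(n!) ≤ n - 1`.
Hence `x ^ (n - 1)` lies in `m ^ (e * v_p(n!)) = (p ^ v_p(n!)) = (n!)`, the prime-to-`p` part of
`n!` being a unit, and the remaining factor `x` of `x ^ n` keeps the quotient `x ^ n / n!` in `m`.
-/

theorem isUnit_natCast_of_coprime {p : ℕ} [Fact p.Prime] (R : Type*) [Semiring R]
    [Algebra ℤ_[p] R] {k : ℕ} (hk : p.Coprime k) : IsUnit (k : R) := by
  have hk_unit : IsUnit (k : ℤ_[p]) :=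
    PadicInt.isUnit_iff.2 (PadicInt.norm_natCast_eq_one_iff.2 hk)
  simpa only [map_natCast] using hk_unit.map (algebraMap ℤ_[p] R)

theorem mul_factorization_factorial_le_sub_one {p e n : ℕ} (hp : p.Prime) (hep : e ≤ p - 1)
    (hn : n ≠ 0) : e * n.factorial.factorization p ≤ n - 1 := by
  have : Fact p.Prime := ⟨hp⟩
  rw [Nat.factorization_def _ hp]
  refine Nat.le_sub_one_of_lt ?_
  calc e * padicValNat p n.factorial ≤ (p - 1) * padicValNat p n.factorial := by gcongr
    _ < n := sub_one_mul_padicValNat_factorial_lt_of_ne_zero p hn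

section CoprimeUnits

variable {R : Type*} [CommSemiring R] {p : ℕ}

theorem associated_pow_factorization_natCast (hp : p.Prime)
    (hunit : ∀ k : ℕ, p.Coprime k → IsUnit (k : R)) {n : ℕ} (hn : n ≠ 0) :
    Associated ((p : R) ^ n.factorization p) (n : R) := by
  obtain ⟨u, hu⟩ := hunit _ (Nat.coprime_ordCompl hp hn)
  refine ⟨u, ?_⟩
  rw [hu, ← Nat.cast_pow, ← Nat.cast_mul, Nat.ordProj_mul_ordCompl_eq_self]

theorem factorial_dvd_of_mem_pow_sub_one (hp : p.Prime)
    (hunit : ∀ k : ℕ, p.Coprime k → IsUnit (k : R)) {I : Ideal R} {e : ℕ}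
    (hI : I ^ e ≤ Ideal.span {(p : R)}) (hep : e ≤ p - 1) {n : ℕ} (hn : n ≠ 0) {a : R}
    (ha : a ∈ I ^ (n - 1)) : (n.factorial : R) ∣ a := by
  set v := n.factorial.factorization p
  have hle : I ^ (n - 1) ≤ Ideal.span {(p : R) ^ v} :=
    calc I ^ (n - 1) ≤ I ^ (e * v) :=
          Ideal.pow_le_pow_right (mul_factorization_factorial_le_sub_one hp hep hn)
      _ = (I ^ e) ^ v := pow_mul I e v
      _ ≤ Ideal.span {(p : R)} ^ v := Ideal.pow_right_mono hI v
      _ = Ideal.span {(p : R) ^ v} := Ideal.span_singleton_pow _ v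
  have hassoc := associated_pow_factorization_natCast hp hunit n.factorial_ne_zero
  exact hassoc.dvd_iff_dvd_left.1 (Ideal.mem_span_singleton.1 (hle ha))

theorem stmt10_general (hp : p.Prime) (hunit : ∀ k : ℕ, p.Coprime k → IsUnit (k : R))
    {I : Ideal R} {e : ℕ} (hI : I ^ e ≤ Ideal.span {(p : R)}) (hep : e ≤ p - 1) {x : R}
    (hx : x ∈ I) {n : ℕ} (hn : n ≠ 0) : ∃ y ∈ I, (n.factorial : R) * y = x ^ n := by
  obtain ⟨z, hz⟩ :=
    factorial_dvd_of_mem_pow_sub_one hp hunit hI hep hn (Ideal.pow_mem_pow hx (n - 1))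
  refine ⟨z * x, I.mul_mem_left z hx, ?_⟩
  rw [← mul_assoc, ← hz, pow_sub_one_mul hn]

end CoprimeUnits

set_option synthInstance.maxHeartbeats 1000000 in
/-- Let `p` be a prime, `L` a finite extension of `ℚ_p`, `O_L` the
integral closure of `ℤ_p` in `L`, `m` the maximal ideal of `O_L`, and `e` the ramification
index, i.e. `p·O_L = m^e`.  If `e ≤ p - 1`, then for every `x ∈ m` and every `n ≥ 1` the
element `xⁿ/n!` of `L` lies in `m` (division-free: there is `y ∈ m` with `n!·y = xⁿ`). -/
theorem stmt10 (p : ℕ) [Fact p.Prime]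
    (L : Type*) [Field L] [Algebra ℚ_[p] L] [FiniteDimensional ℚ_[p] L]
    [Algebra ℤ_[p] L] [IsScalarTower ℤ_[p] ℚ_[p] L]
    (m : Ideal (integralClosure ℤ_[p] L)) (hm : m.IsMaximal)
    (e : ℕ)
    (he : Ideal.span {(p : integralClosure ℤ_[p] L)} = m ^ e)
    (hep : e ≤ p - 1) :
    ∀ x : integralClosure ℤ_[p] L, x ∈ m → ∀ n : ℕ, 1 ≤ n →
      ∃ y ∈ m, ((n.factorial : L) * (y : L) = (x : L) ^ n) := by
  intro x hx n hn
  obtain ⟨y, hy, hxy⟩ :=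
    stmt10_general Fact.out (fun _ => isUnit_natCast_of_coprime _) he.ge hep hx
      (Nat.one_le_iff_ne_zero.1 hn)
  exact ⟨y, hy, mod_cast congrArg Subtype.val hxy⟩
end
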